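/- Let L be an invertible real m×m matrix and let N : ℝ^m → ℝ^m be continuously differentiable in a neighborhood of x*, positively homogeneous of degree p, and satisfy L x* = N(x*) and ⟨N(x*), x*⟩ ≠ 0. For a real parameter γ, let F(x) = m(x)^γ · L⁻¹N(x) with m(x) = ⟨Lx, x⟩/⟨N(x), x⟩. Then F'(x*) x* = (p + γ(1 − p))·x*; in particular, for the optimal choice γ = p/(p − 1) (with p ≠ 1) one has F'(x*) x* = 0, i.e., the eigenvalue p of the classical iteration matrix in the direction x* is moved to 0. -/

import Mathlib

open Matrix

open Filter Topology

/-! If `F` multiplies the points of the ray through `x` by `t ^ q`, then differentiating along the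
ray at `t = 1` gives `F' x = q F x` (Euler). The Petviashvili map inherits degree
`p + γ (1 - p)` from `N`, because the stabilizing factor has degree `1 - p` and `L⁻¹ N` degree `p`.
A solution of `L x = N x` with `⟨N x, x⟩ ≠ 0` has stabilizing factor `1`, so it is a fixed point of
the Petviashvili map, and Euler's identity there is the eigenvalue equation. -/

section Petviashvili

variable {E F : Type*} [NormedAddCommGroup E] [NormedSpace ℝ E]
  [NormedAddCommGroup F] [NormedSpace ℝ F]

theorem fderiv_apply_self_of_eventually_smul {G : E → F} {q : ℝ} {x : E}
    (hG : DifferentiableAt ℝ G x)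
    (hhom : ∀ᶠ t in 𝓝 (1 : ℝ), G (t • x) = t ^ q • G x) :
    fderiv ℝ G x x = q • G x := by
  have along_ray : HasDerivAt (fun t : ℝ => G (t • x)) (fderiv ℝ G x x) 1 := by
    have ray : HasDerivAt (fun t : ℝ => t • x) x 1 := by
      simpa using (hasDerivAt_id (1 : ℝ)).smul_const x
    exact hG.hasFDerivAt.comp_hasDerivAt_of_eq 1 ray (one_smul ℝ x).symm
  have power : HasDerivAt (fun t : ℝ => t ^ q • G x) (q • G x) 1 := by
    simpa using (Real.hasDerivAt_rpow_const (p := q) (Or.inl one_ne_zero)).smul_const (G x)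
  exact along_ray.unique (power.congr_of_eventuallyEq hhom)

/-- The stabilizing factor `m(x) = ⟨L x, x⟩ / ⟨N x, x⟩`, where the inner product of `ℝ^m` is
replaced by a continuous bilinear pairing `B` of the target of `L` with its source.
It has the junk value `0` where `⟨N x, x⟩ = 0`. -/
noncomputable def stabilizingFactor (B : F →L[ℝ] E →L[ℝ] ℝ) (L : E →L[ℝ] F) (N : E → F)
    (x : E) : ℝ :=
  B (L x) x / B (N x) x

variable {B : F →L[ℝ] E →L[ℝ] ℝ} {N : E → F} {p t : ℝ} {x : E}

section StabilizingFactor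

variable {L : E →L[ℝ] F}

theorem stabilizingFactor_smul (ht : 0 < t) (hN : N (t • x) = t ^ p • N x) :
    stabilizingFactor B L N (t • x) = t ^ (1 - p) * stabilizingFactor B L N x := by
  simp only [stabilizingFactor, hN, map_smul, _root_.smul_apply, smul_eq_mul,
    Real.rpow_sub ht, Real.rpow_one]
  have rpow_ne_zero : t ^ p ≠ 0 := (Real.rpow_pos_of_pos ht p).ne'
  field_simp

theorem stabilizingFactor_eq_one (hfix : L x = N x) (hne : B (N x) x ≠ 0) :
    stabilizingFactor B L N x = 1 := by
  rw [stabilizingFactor, hfix, div_self hne]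

theorem differentiableAt_stabilizingFactor (hN : DifferentiableAt ℝ N x) (hne : B (N x) x ≠ 0) :
    DifferentiableAt ℝ (stabilizingFactor B L N) x := by
  have pairing {f : E → F} (hf : DifferentiableAt ℝ f x) :
      DifferentiableAt ℝ (fun y => B (f y) y) x :=
    (B.differentiableAt.comp x hf).clm_apply differentiableAt_id
  unfold stabilizingFactor
  simp only [div_eq_mul_inv]
  exact (pairing L.differentiableAt).fun_mul ((pairing hN).fun_inv hne)

end StabilizingFactor

/-- The iteration map `x ↦ m(x) ^ γ • L⁻¹ (N x)` of Petviashvili's method for `L x = N x`, with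
`m` the stabilizing factor; `γ = 0` is the classical iteration `L⁻¹ ∘ N`. -/
noncomputable def petviashviliMap (B : F →L[ℝ] E →L[ℝ] ℝ) (L : E ≃L[ℝ] F) (N : E → F) (γ : ℝ)
    (x : E) : E :=
  stabilizingFactor B L N x ^ γ • L.symm (N x)

variable {L : E ≃L[ℝ] F}

theorem petviashviliMap_smul (γ : ℝ) (ht : 0 < t) (hN : N (t • x) = t ^ p • N x)
    (hx : 0 ≤ stabilizingFactor B L N x) :
    petviashviliMap B L N γ (t • x) = t ^ (p + γ * (1 - p)) • petviashviliMap B L N γ x := by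
  have exponents : (t ^ (1 - p)) ^ γ * t ^ p = t ^ (p + γ * (1 - p)) := by
    rw [← Real.rpow_mul ht.le, ← Real.rpow_add ht, add_comm, mul_comm γ]
  calc petviashviliMap B L N γ (t • x)
      = (t ^ (1 - p) * stabilizingFactor B L N x) ^ γ • t ^ p • L.symm (N x) := by
        rw [petviashviliMap, stabilizingFactor_smul ht hN, hN, map_smul]
    _ = ((t ^ (1 - p)) ^ γ * t ^ p) • petviashviliMap B L N γ x := by
        rw [Real.mul_rpow (Real.rpow_nonneg ht.le _) hx, petviashviliMap, smul_smul, smul_smul,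
          mul_right_comm]
    _ = t ^ (p + γ * (1 - p)) • petviashviliMap B L N γ x := by rw [exponents]

theorem petviashviliMap_eq_self (γ : ℝ) (hfix : L x = N x) (hne : B (N x) x ≠ 0) :
    petviashviliMap B L N γ x = x := by
  rw [petviashviliMap, stabilizingFactor_eq_one hfix hne, Real.one_rpow, one_smul, ← hfix,
    L.symm_apply_apply]

theorem differentiableAt_petviashviliMap (γ : ℝ) (hN : DifferentiableAt ℝ N x)
    (hm : stabilizingFactor B L N x ≠ 0) :
    DifferentiableAt ℝ (petviashviliMap B L N γ) x := by
  have hne : B (N x) x ≠ 0 := fun h => hm (by rw [stabilizingFactor, h, div_zero])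
  exact ((differentiableAt_stabilizingFactor hN hne).rpow_const (Or.inl hm)).smul
    (L.symm.differentiableAt.comp x hN)

theorem petviashvili_moves_eigenvalue_in_direction_of_fixed_point_general
    (B : F →L[ℝ] E →L[ℝ] ℝ) (L : E ≃L[ℝ] F) (N : E → F) (p : ℝ) (xs : E)
    (hhom : ∀ᶠ t in 𝓝 (1 : ℝ), N (t • xs) = t ^ p • N xs)
    (hN : DifferentiableAt ℝ N xs)
    (hfix : L xs = N xs)
    (hne : B (N xs) xs ≠ 0)
    (γ : ℝ) :
    fderiv ℝ (petviashviliMap B L N γ) xs xs = (p + γ * (1 - p)) • xs ∧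
    (p ≠ 1 → γ = p / (p - 1) → fderiv ℝ (petviashviliMap B L N γ) xs xs = 0) := by
  have factor_one : stabilizingFactor B L N xs = 1 := stabilizingFactor_eq_one hfix hne
  have homogeneous : ∀ᶠ t in 𝓝 (1 : ℝ), petviashviliMap B L N γ (t • xs)
      = t ^ (p + γ * (1 - p)) • petviashviliMap B L N γ xs := by
    filter_upwards [hhom, lt_mem_nhds one_pos] with t hNt ht
    exact petviashviliMap_smul γ ht hNt (factor_one ▸ zero_le_one)
  have eigen : fderiv ℝ (petviashviliMap B L N γ) xs xs = (p + γ * (1 - p)) • xs := by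
    simpa only [petviashviliMap_eq_self γ hfix hne] using fderiv_apply_self_of_eventually_smul
      (differentiableAt_petviashviliMap γ hN (factor_one ▸ one_ne_zero)) homogeneous
  refine ⟨eigen, fun hp hγ => ?_⟩
  have degree_zero : p + γ * (1 - p) = 0 := by
    have sub_one_ne_zero : p - 1 ≠ 0 := sub_ne_zero.2 hp
    rw [hγ]
    field_simp
    ring
  rw [eigen, degree_zero, zero_smul]

end Petviashvili

theorem petviashvili_moves_eigenvalue_in_direction_of_fixed_point
    {m : ℕ} (L : Matrix (Fin m) (Fin m) ℝ) (hL : IsUnit L.det)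
    (N : (Fin m → ℝ) → (Fin m → ℝ)) (p : ℝ) (xs : Fin m → ℝ)
    (hhom : ∀ t : ℝ, 0 < t → ∀ x : Fin m → ℝ, N (t • x) = (t ^ p) • N x)
    (hC1 : ContDiffAt ℝ 1 N xs)
    (hfix : L.mulVec xs = N xs)
    (hne : N xs ⬝ᵥ xs ≠ 0)
    (γ : ℝ) :
    fderiv ℝ (fun x => ((L.mulVec x ⬝ᵥ x) / (N x ⬝ᵥ x)) ^ γ • L⁻¹.mulVec (N x)) xs xs
      = (p + γ * (1 - p)) • xs ∧
    (p ≠ 1 → γ = p / (p - 1) →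
      fderiv ℝ (fun x => ((L.mulVec x ⬝ᵥ x) / (N x ⬝ᵥ x)) ^ γ • L⁻¹.mulVec (N x)) xs xs
        = 0) :=
  petviashvili_moves_eigenvalue_in_direction_of_fixed_point_general
    (dotProductBilin ℝ ℝ : (Fin m → ℝ) →ₗ[ℝ] (Fin m → ℝ) →ₗ[ℝ] ℝ).toContinuousBilinearMap
    (toLin'OfInv (L.nonsing_inv_mul hL) (L.mul_nonsing_inv hL)).toContinuousLinearEquiv N p xs
    ((lt_mem_nhds one_pos).mono fun t ht => hhom t ht xs) (hC1.differentiableAt one_ne_zero)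
    hfix hne γ
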